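/- arXiv:1803.02012 — 4 statements merged into one kernel-verified Lean document; each statement's English description precedes it below -/
import Mathlib

section
/- Let Q be a probability measure on a measurable space Ω, W : Ω → ℝ a measurable function, and α₀ ∈ (0,1). Let c := sInf {s ∈ ℝ | Q{ω | W ω ≤ s} ≥ 1 − α₀} be the lower (1−α₀)-quantile of W, and define κ := 0 if Q{W = c} = 0, and κ := (α₀ − Q{W > c}) / Q{W = c} otherwise (all measure values taken as reals). Then κ ∈ [0,1], and the [0,1]-valued function ψ♯ := 1_{W > c} + κ · 1_{W = c} satisfies ∫ ψ♯ dQ = α₀. -/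
open MeasureTheory

/-!
The lower `p`-quantile `c` of a law `μ` satisfies `μ (Iio c) ≤ p ≤ μ (Iic c)`, by continuity of `μ`
from below and from above. With `p = 1 - α₀` this says that rejecting on `{W > c}` has size at most
`α₀`, while rejecting on `{W ≥ c}` has size at least `α₀`. Rejecting with probability `κ` on the tie
`{W = c}` interpolates affinely between these two sizes, and `κ` solves the resulting linear
equation.
-/

section Randomization

variable {Ω : Type*}

/-- The test function that rejects on `A`, rejects with probability `κ` on `B`, and accepts
elsewhere. It takes values in `[0, 1]` only when `A` and `B` are disjoint and `κ ∈ [0, 1]`. -/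
noncomputable def randomizedTest (A B : Set Ω) (κ : ℝ) (ω : Ω) : ℝ :=
  A.indicator 1 ω + κ * B.indicator 1 ω

theorem randomizedTest_mem_Icc {A B : Set Ω} (hAB : Disjoint A B) {κ : ℝ}
    (hκ : κ ∈ Set.Icc (0 : ℝ) 1) (ω : Ω) : randomizedTest A B κ ω ∈ Set.Icc (0 : ℝ) 1 := by
  by_cases hA : ω ∈ A
  · simp [randomizedTest, hA, hAB.notMem_of_mem_left hA]
  · by_cases hB : ω ∈ B
    · simpa [randomizedTest, hA, hB] using hκ
    · simp [randomizedTest, hA, hB]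

variable [MeasurableSpace Ω] {Q : Measure Ω} {A B : Set Ω} {α : ℝ}

/-- The rejection probability on `B` that gives `randomizedTest A B` size `α` under `Q`. If `B` is
null then division by zero makes it `0`. -/
noncomputable def randomizationWeight (Q : Measure Ω) (A B : Set Ω) (α : ℝ) : ℝ :=
  (α - Q.real A) / Q.real B

theorem randomizationWeight_mem_Icc (hA : Q.real A ≤ α) (hAB : α ≤ Q.real A + Q.real B) :
    randomizationWeight Q A B α ∈ Set.Icc (0 : ℝ) 1 :=
  unitInterval.div_mem (sub_nonneg.2 hA) measureReal_nonneg (sub_le_iff_le_add'.2 hAB)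

variable [IsFiniteMeasure Q]

theorem integral_randomizedTest (hA : NullMeasurableSet A Q) (hB : NullMeasurableSet B Q) (κ : ℝ) :
    ∫ ω, randomizedTest A B κ ω ∂Q = Q.real A + κ * Q.real B := by
  have integrable_indicator {s : Set Ω} (hs : NullMeasurableSet s Q) :
      Integrable (s.indicator (1 : Ω → ℝ)) Q := (integrable_const 1).indicator₀ hs
  have integral_indicator_eq {s : Set Ω} (hs : NullMeasurableSet s Q) :
      ∫ ω, s.indicator (1 : Ω → ℝ) ω ∂Q = Q.real s := by simp [integral_indicator₀ hs]
  simp only [randomizedTest]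
  rw [integral_add (integrable_indicator hA) ((integrable_indicator hB).const_mul κ),
    integral_const_mul, integral_indicator_eq hA, integral_indicator_eq hB]

theorem integral_randomizedTest_randomizationWeight (hA : NullMeasurableSet A Q)
    (hB : NullMeasurableSet B Q) (hAα : Q.real A ≤ α) (hαAB : α ≤ Q.real A + Q.real B) :
    ∫ ω, randomizedTest A B (randomizationWeight Q A B α) ω ∂Q = α := by
  have size_eq_of_null : Q.real B = 0 → α - Q.real A = 0 := fun hB0 ↦ by linarith
  rw [integral_randomizedTest hA hB, randomizationWeight, div_mul_cancel_of_imp size_eq_of_null,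
    add_sub_cancel]

end Randomization

section Quantile

open Set
open scoped ENNReal

variable {R : Type*} [MeasurableSpace R] {μ : Measure R}

/-- The lower `p`-quantile of `μ`. When no `Iic s` has measure at least `p`, or when the `s` with
this property are not bounded below, `sInf` returns a junk value. -/
noncomputable def lowerQuantile [Preorder R] [InfSet R] (μ : Measure R) (p : ℝ) : R :=
  sInf {s | p ≤ μ.real (Iic s)}

theorem isUpperSet_setOf_le_measureReal_Iic [Preorder R] [IsFiniteMeasure μ] (p : ℝ) :
    IsUpperSet {s | p ≤ μ.real (Iic s)} :=
  fun _ _ hst hs ↦ hs.trans (measureReal_mono (Iic_subset_Iic.2 hst))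

variable [TopologicalSpace R] [SecondCountableTopology R]

section LinearOrder

variable [LinearOrder R] [OrderTopology R]

theorem measure_Iio_le_of_forall_measure_Iic_le {c : R} {p : ℝ≥0∞}
    (h : ∀ s < c, μ (Iic s) ≤ p) : μ (Iio c) ≤ p := by
  have Iio_eq_iUnion : Iio c = ⋃ s : Iio c, Iic (s : R) := by
    ext x
    simpa using ⟨fun hx ↦ ⟨x, hx, le_rfl⟩, fun ⟨s, hs, hxs⟩ ↦ hxs.trans_lt hs⟩
  have monotone_Iic_coe : Monotone fun s : Iio c ↦ Iic (s : R) :=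
    monotone_Iic.comp (Subtype.mono_coe _)
  rw [Iio_eq_iUnion, monotone_Iic_coe.measure_iUnion]
  exact iSup_le fun s ↦ h s s.2

theorem le_measure_iInter_Iic [OpensMeasurableSpace R] [IsFiniteMeasure μ] {S : Set R}
    (hSc : OrdConnected S) (hS : S.Nonempty) {p : ℝ≥0∞} (h : ∀ s ∈ S, p ≤ μ (Iic s)) :
    p ≤ μ (⋂ s : S, Iic (s : R)) := by
  have monotone_Iic_coe : Monotone fun s : S ↦ Iic (s : R) :=
    monotone_Iic.comp (Subtype.mono_coe _)
  obtain ⟨s₀, hs₀⟩ := hS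
  rw [monotone_Iic_coe.measure_iInter (fun _ ↦ measurableSet_Iic.nullMeasurableSet)
    ⟨⟨s₀, hs₀⟩, measure_ne_top _ _⟩]
  exact le_iInf fun s ↦ h s s.2

theorem exists_le_measureReal_Iic [Nonempty R] [IsFiniteMeasure μ] {p : ℝ}
    (hp : p < μ.real univ) : ∃ s, p ≤ μ.real (Iic s) := by
  have tendsto_real : Filter.Tendsto (fun s ↦ μ.real (Iic s)) Filter.atTop (nhds (μ.real univ)) :=
    (ENNReal.tendsto_toReal (measure_ne_top _ _)).comp (tendsto_measure_Iic_atTop μ)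
  obtain ⟨s, hs⟩ := (tendsto_real.eventually_const_lt hp).exists
  exact ⟨s, hs.le⟩

theorem ofReal_le_measure_iInter_setOf_le_measureReal_Iic [OpensMeasurableSpace R]
    [Nonempty R] [IsFiniteMeasure μ] {p : ℝ} (hp : p < μ.real univ) :
    ENNReal.ofReal p ≤ μ (⋂ s : {s | p ≤ μ.real (Iic s)}, Iic (s : R)) :=
  le_measure_iInter_Iic (isUpperSet_setOf_le_measureReal_Iic p).ordConnected
    (exists_le_measureReal_Iic hp) fun _ hs ↦ ENNReal.ofReal_le_of_le_toReal hs

theorem bddBelow_setOf_le_measureReal_Iic [OpensMeasurableSpace R] [Nonempty R]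
    [IsFiniteMeasure μ] {p : ℝ} (hp₀ : 0 < p) (hp : p < μ.real univ) :
    BddBelow {s | p ≤ μ.real (Iic s)} := by
  have measure_pos := (ENNReal.ofReal_pos.2 hp₀).trans_le
    (ofReal_le_measure_iInter_setOf_le_measureReal_Iic hp)
  simpa using nonempty_iInter_Iic_iff.1 (nonempty_of_measure_ne_zero measure_pos.ne')

end LinearOrder

variable [ConditionallyCompleteLinearOrder R] [OrderTopology R] [OpensMeasurableSpace R]
  [IsFiniteMeasure μ] {p : ℝ}

theorem measureReal_Iio_lowerQuantile_le (hp₀ : 0 < p) (hp : p < μ.real univ) :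
    μ.real (Iio (lowerQuantile μ p)) ≤ p := by
  have : Nonempty R := ⟨sInf ∅⟩
  refine ENNReal.toReal_le_of_le_ofReal hp₀.le
    (measure_Iio_le_of_forall_measure_Iic_le fun s hs ↦ ?_)
  have measureReal_Iic_lt : μ.real (Iic s) < p :=
    not_le.1 fun h ↦ hs.not_ge (csInf_le (bddBelow_setOf_le_measureReal_Iic hp₀ hp) h)
  exact (ENNReal.le_ofReal_iff_toReal_le (measure_ne_top _ _) hp₀.le).2 measureReal_Iic_lt.le

theorem le_measureReal_Iic_lowerQuantile (hp : p < μ.real univ) :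
    p ≤ μ.real (Iic (lowerQuantile μ p)) := by
  have : Nonempty R := ⟨sInf ∅⟩
  have iInter_subset_Iic : ⋂ s : {s | p ≤ μ.real (Iic s)}, Iic (s : R) ⊆ Iic (lowerQuantile μ p) :=
    fun x hx ↦ le_csInf (exists_le_measureReal_Iic hp) fun s hs ↦ mem_iInter.1 hx ⟨s, hs⟩
  exact (ENNReal.ofReal_le_iff_le_toReal (measure_ne_top _ _)).1
    ((ofReal_le_measure_iInter_setOf_le_measureReal_Iic hp).trans (measure_mono iInter_subset_Iic))

end Quantile

section ThresholdTest

variable {Ω R : Type*} [MeasurableSpace Ω] {Q : Measure Ω} [IsProbabilityMeasure Q]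
  [ConditionallyCompleteLinearOrder R] [TopologicalSpace R] [OrderTopology R]
  [SecondCountableTopology R] [MeasurableSpace R] [OpensMeasurableSpace R] {W : Ω → R} {α₀ : ℝ}

theorem measureReal_gt_lowerQuantile_le (hW : AEMeasurable W Q) (hα₀ : 0 < α₀) :
    Q.real {ω | W ω > lowerQuantile (Q.map W) (1 - α₀)} ≤ α₀ := by
  have := Measure.isProbabilityMeasure_map hW
  have one_sub_le := le_measureReal_Iic_lowerQuantile (μ := Q.map W) (p := 1 - α₀) (by simpa)
  rw [← Set.compl_Ioi, probReal_compl_eq_one_sub measurableSet_Ioi,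
    map_measureReal_apply_of_aemeasurable hW measurableSet_Ioi] at one_sub_le
  exact (sub_le_sub_iff_left 1).1 one_sub_le

theorem le_measureReal_gt_add_measureReal_eq_lowerQuantile (hW : AEMeasurable W Q)
    (hα₀ : α₀ ∈ Set.Ioo (0 : ℝ) 1) :
    α₀ ≤ Q.real {ω | W ω > lowerQuantile (Q.map W) (1 - α₀)} +
      Q.real {ω | W ω = lowerQuantile (Q.map W) (1 - α₀)} := by
  have := Measure.isProbabilityMeasure_map hW
  set c := lowerQuantile (Q.map W) (1 - α₀)
  have measureReal_Ici :
      (Q.map W).real (Set.Ici c) = Q.real {ω | W ω > c} + Q.real {ω | W ω = c} := by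
    rw [← Set.Ioi_union_left, measureReal_union (by simp) (measurableSet_singleton c),
      map_measureReal_apply_of_aemeasurable hW measurableSet_Ioi,
      map_measureReal_apply_of_aemeasurable hW (measurableSet_singleton c)]
    rfl
  have le_one_sub : (Q.map W).real (Set.Iio c) ≤ 1 - α₀ :=
    measureReal_Iio_lowerQuantile_le (sub_pos.2 hα₀.2) (by simpa using hα₀.1)
  rw [← Set.compl_Ici, probReal_compl_eq_one_sub measurableSet_Ici, measureReal_Ici] at le_one_sub
  exact (sub_le_sub_iff_left 1).1 le_one_sub

end ThresholdTest

theorem randomized_test_general {Ω R : Type*} [MeasurableSpace Ω] (Q : Measure Ω)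
    [IsProbabilityMeasure Q] [ConditionallyCompleteLinearOrder R] [TopologicalSpace R]
    [OrderTopology R] [SecondCountableTopology R] [MeasurableSpace R] [OpensMeasurableSpace R]
    (W : Ω → R) (hW : AEMeasurable W Q) (α₀ : ℝ) (hα₀ : α₀ ∈ Set.Ioo (0 : ℝ) 1)
    (c : R) (hc : c = sInf {s | 1 - α₀ ≤ Q.real {ω | W ω ≤ s}})
    (κ : ℝ)
    (hκ : κ = if Q.real {ω | W ω = c} = 0 then 0
              else (α₀ - Q.real {ω | W ω > c}) / Q.real {ω | W ω = c})
    (ψ : Ω → ℝ)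
    (hψ : ψ = fun ω ↦ {ω | W ω > c}.indicator 1 ω + κ * {ω | W ω = c}.indicator 1 ω) :
    κ ∈ Set.Icc (0 : ℝ) 1 ∧ (∀ ω, ψ ω ∈ Set.Icc (0 : ℝ) 1) ∧ ∫ ω, ψ ω ∂Q = α₀ := by
  set A := {ω | W ω > c}
  set B := {ω | W ω = c}
  obtain rfl : c = lowerQuantile (Q.map W) (1 - α₀) := by
    simp only [lowerQuantile, map_measureReal_apply_of_aemeasurable hW measurableSet_Iic]
    exact hc
  obtain rfl : κ = randomizationWeight Q A B α₀ := by
    rw [hκ, randomizationWeight]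
    split_ifs with hB <;> simp [hB]
  obtain rfl : ψ = randomizedTest A B (randomizationWeight Q A B α₀) := hψ
  have disjoint_AB : Disjoint A B :=
    Set.disjoint_left.2 fun ω (hgt : W ω > _) (heq : W ω = _) ↦ hgt.ne' heq
  have size_le : Q.real A ≤ α₀ := measureReal_gt_lowerQuantile_le hW hα₀.1
  have le_size : α₀ ≤ Q.real A + Q.real B :=
    le_measureReal_gt_add_measureReal_eq_lowerQuantile hW hα₀
  have weight_mem := randomizationWeight_mem_Icc size_le le_size
  exact ⟨weight_mem, randomizedTest_mem_Icc disjoint_AB weight_mem,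
    integral_randomizedTest_randomizationWeight (hW.nullMeasurableSet_preimage measurableSet_Ioi)
      (hW.nullMeasurableSet_preimage (measurableSet_singleton _)) size_le le_size⟩

/-- Lemma A.5: the randomized threshold test `ψ♯ = 1_{W > c} + κ·1_{W = c}` built from
the lower `(1-α₀)`-quantile `c` of `W` satisfies `κ ∈ [0,1]`, is `[0,1]`-valued, and has
expectation `α₀` under `Q`. -/
theorem randomized_test {Ω : Type*} [MeasurableSpace Ω]
    (Q : Measure Ω) [IsProbabilityMeasure Q]
    (W : Ω → ℝ) (hW : Measurable W) (α₀ : ℝ) (hα₀ : α₀ ∈ Set.Ioo (0:ℝ) 1)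
    (c : ℝ) (hc : c = sInf {s : ℝ | 1 - α₀ ≤ (Q {ω | W ω ≤ s}).toReal})
    (κ : ℝ)
    (hκ : κ = if (Q {ω | W ω = c}).toReal = 0 then 0
              else (α₀ - (Q {ω | W ω > c}).toReal) / (Q {ω | W ω = c}).toReal)
    (ψ : Ω → ℝ)
    (hψ : ψ = fun ω => ({ω | W ω > c} : Set Ω).indicator 1 ω
                + κ * ({ω | W ω = c} : Set Ω).indicator 1 ω) :
    κ ∈ Set.Icc (0:ℝ) 1 ∧ (∀ ω, ψ ω ∈ Set.Icc (0:ℝ) 1) ∧ ∫ ω, ψ ω ∂Q = α₀ :=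
  randomized_test_general Q W hW.aemeasurable α₀ hα₀ c hc κ hκ ψ hψ
end

section
/- (Neyman–Pearson direction.) Let μ be a probability measure on Ω, Z : Ω → ℝ a nonnegative measurable function with ∫ Z dμ = 1, and let ν := μ.withDensity Z (so ν is a probability measure with ν ≪ μ). Suppose ψ⁰ : Ω → ℝ is measurable with 0 ≤ ψ⁰ ≤ 1 and there exists c ∈ [0,∞] (extended nonnegative real) such that ψ⁰ = 1 μ-a.e. on {ω | c · Z ω < 1} and ψ⁰ = 0 μ-a.e. on {ω | c · Z ω > 1} (with the convention ∞ · 0 = 0). Then for every measurable ψ : Ω → ℝ with 0 ≤ ψ ≤ 1: if ∫ ψ dν ≤ ∫ ψ⁰ dν, then ∫ ψ dμ ≤ ∫ ψ⁰ dμ. -/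
open MeasureTheory

/-!
Let `ν = f μ` and `t = c f`. The threshold form of `φ₀` says that `φ₀` maximizes `φ ↦ (1 - t) φ`
pointwise over tests `φ`. Written without subtraction, `φ + t φ₀ ≤ φ₀ + t φ`, this makes sense in
`ℝ≥0∞` also where `t = ∞`. Integrating gives
`∫ φ dμ + c ∫ φ₀ dν ≤ ∫ φ₀ dμ + c ∫ φ dν ≤ ∫ φ₀ dμ + c ∫ φ₀ dν`, and `c ∫ φ₀ dν` is finite, hence
cancels: if `c = ∞`, then `φ₀` vanishes wherever `f > 0`, so that `∫ φ₀ dν = 0`.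
-/

open scoped ENNReal

theorem add_mul_le_add_mul_of_threshold {t a b : ℝ≥0∞} (ha : a ≤ 1)
    (h1 : t < 1 → b = 1) (h0 : 1 < t → b = 0) : a + t * b ≤ b + t * a := by
  rcases lt_trichotomy t 1 with ht | rfl | ht
  · obtain ⟨d, hd⟩ := exists_add_of_le ha
    calc a + t * b = a + t * a + t * d := by rw [h1 ht, hd, mul_add, add_assoc]
      _ ≤ a + t * a + d := by gcongr; exact mul_le_of_le_one_left' ht.le
      _ = b + t * a := by rw [h1 ht, hd, add_right_comm]
  · simp only [one_mul, add_comm a b, le_refl]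
  · simpa only [h0 ht, mul_zero, add_zero, zero_add] using le_mul_of_one_le_left' ht.le

section Threshold

variable {Ω : Type*} [MeasurableSpace Ω] {μ : Measure Ω} {f : Ω → ℝ≥0∞} {c : ℝ≥0∞}

theorem mul_lintegral_withDensity_ne_top_of_threshold {φ₀ : Ω → ℝ≥0∞} (hf : AEMeasurable f μ)
    (hφ₀ : ∫⁻ ω, φ₀ ω ∂μ.withDensity f ≠ ∞) (h0 : ∀ᵐ ω ∂μ, 1 < c * f ω → φ₀ ω = 0) :
    c * ∫⁻ ω, φ₀ ω ∂μ.withDensity f ≠ ∞ := by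
  rcases eq_or_ne c ∞ with rfl | hc
  · have φ₀_eq_zero : ∀ᵐ ω ∂μ.withDensity f, φ₀ ω = 0 := by
      rw [ae_withDensity_iff' hf]
      filter_upwards [h0] with ω h hfω
      exact h (by simp only [ENNReal.top_mul hfω, ENNReal.one_lt_top])
    simp only [lintegral_congr_ae φ₀_eq_zero, lintegral_zero, mul_zero, ne_eq,
      ENNReal.zero_ne_top, not_false_eq_true]
  · exact ENNReal.mul_ne_top hc hφ₀

theorem lintegral_add_mul_lintegral_withDensity {φ ψ : Ω → ℝ≥0∞} (hf : AEMeasurable f μ)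
    (hφ : AEMeasurable φ μ) (hψ : AEMeasurable ψ μ) (c : ℝ≥0∞) :
    ∫⁻ ω, φ ω ∂μ + c * ∫⁻ ω, ψ ω ∂μ.withDensity f = ∫⁻ ω, φ ω + c * f ω * ψ ω ∂μ := by
  rw [lintegral_add_left' hφ, lintegral_withDensity_eq_lintegral_mul₀ hf hψ,
    ← lintegral_const_mul'' c (hf.mul hψ)]
  simp only [Pi.mul_apply, mul_assoc]

theorem lintegral_le_lintegral_of_threshold {φ₀ φ : Ω → ℝ≥0∞} (hf : AEMeasurable f μ)
    (hφ₀m : AEMeasurable φ₀ μ) (hφ₀ : ∫⁻ ω, φ₀ ω ∂μ.withDensity f ≠ ∞)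
    (h1 : ∀ᵐ ω ∂μ, c * f ω < 1 → φ₀ ω = 1) (h0 : ∀ᵐ ω ∂μ, 1 < c * f ω → φ₀ ω = 0)
    (hφm : AEMeasurable φ μ) (hφ1 : ∀ᵐ ω ∂μ, φ ω ≤ 1)
    (hle : ∫⁻ ω, φ ω ∂μ.withDensity f ≤ ∫⁻ ω, φ₀ ω ∂μ.withDensity f) :
    ∫⁻ ω, φ ω ∂μ ≤ ∫⁻ ω, φ₀ ω ∂μ := by
  refine (ENNReal.add_le_add_iff_right
    (mul_lintegral_withDensity_ne_top_of_threshold hf hφ₀ h0)).1 ?_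
  calc ∫⁻ ω, φ ω ∂μ + c * ∫⁻ ω, φ₀ ω ∂μ.withDensity f
      = ∫⁻ ω, φ ω + c * f ω * φ₀ ω ∂μ := lintegral_add_mul_lintegral_withDensity hf hφm hφ₀m c
    _ ≤ ∫⁻ ω, φ₀ ω + c * f ω * φ ω ∂μ := by
      apply lintegral_mono_ae
      filter_upwards [hφ1, h1, h0] with ω using add_mul_le_add_mul_of_threshold
    _ = ∫⁻ ω, φ₀ ω ∂μ + c * ∫⁻ ω, φ ω ∂μ.withDensity f :=
      (lintegral_add_mul_lintegral_withDensity hf hφ₀m hφm c).symm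
    _ ≤ ∫⁻ ω, φ₀ ω ∂μ + c * ∫⁻ ω, φ₀ ω ∂μ.withDensity f := by gcongr

theorem neyman_pearson_direction_general {ψ₀ ψ : Ω → ℝ} (hf : AEMeasurable f μ)
    (hψ₀μ : Integrable ψ₀ μ) (hψ₀ν : Integrable ψ₀ (μ.withDensity f)) (hψ₀0 : 0 ≤ᵐ[μ] ψ₀)
    (h1 : ∀ᵐ ω ∂μ, c * f ω < 1 → ψ₀ ω = 1) (h0 : ∀ᵐ ω ∂μ, 1 < c * f ω → ψ₀ ω = 0)
    (hψμ : AEStronglyMeasurable ψ μ) (hψν : Integrable ψ (μ.withDensity f))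
    (hψ0 : 0 ≤ᵐ[μ] ψ) (hψ1 : ψ ≤ᵐ[μ] 1)
    (hle : ∫ ω, ψ ω ∂μ.withDensity f ≤ ∫ ω, ψ₀ ω ∂μ.withDensity f) :
    ∫ ω, ψ ω ∂μ ≤ ∫ ω, ψ₀ ω ∂μ := by
  have hac : μ.withDensity f ≪ μ := withDensity_absolutelyContinuous μ f
  have lintegral_ν_le : ∫⁻ ω, ENNReal.ofReal (ψ ω) ∂μ.withDensity f ≤
      ∫⁻ ω, ENNReal.ofReal (ψ₀ ω) ∂μ.withDensity f := by
    rw [← ofReal_integral_eq_lintegral_ofReal hψν (hac.ae_le hψ0),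
      ← ofReal_integral_eq_lintegral_ofReal hψ₀ν (hac.ae_le hψ₀0)]
    exact ENNReal.ofReal_le_ofReal hle
  have lintegral_μ_le : ∫⁻ ω, ENNReal.ofReal (ψ ω) ∂μ ≤ ∫⁻ ω, ENNReal.ofReal (ψ₀ ω) ∂μ := by
    refine lintegral_le_lintegral_of_threshold (c := c) hf hψ₀μ.aemeasurable.ennreal_ofReal
      hψ₀ν.lintegral_lt_top.ne ?_ ?_ hψμ.aemeasurable.ennreal_ofReal ?_ lintegral_ν_le
    · filter_upwards [h1] with ω h ht
      rw [h ht, ENNReal.ofReal_one]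
    · filter_upwards [h0] with ω h ht
      rw [h ht, ENNReal.ofReal_zero]
    · filter_upwards [hψ1] with ω using ENNReal.ofReal_le_one.2
  rw [integral_eq_lintegral_of_nonneg_ae hψ0 hψμ,
    integral_eq_lintegral_of_nonneg_ae hψ₀0 hψ₀μ.aestronglyMeasurable]
  exact ENNReal.toReal_mono hψ₀μ.lintegral_lt_top.ne lintegral_μ_le

end Threshold

/-- Lemma A.6(a) (Neyman–Pearson direction): a threshold test `ψ0` maximizes the
μ-expectation among all `[0,1]`-valued tests with no larger ν-expectation, where
`ν = μ.withDensity Z`. -/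
theorem neyman_pearson_direction {Ω : Type*} [MeasurableSpace Ω]
    (μ : Measure Ω) [IsProbabilityMeasure μ]
    (Z : Ω → ℝ) (hZmeas : Measurable Z) (hZnn : ∀ ω, 0 ≤ Z ω)
    (hZint : ∫ ω, Z ω ∂μ = 1)
    (ν : Measure Ω) (hν : ν = μ.withDensity (fun ω => ENNReal.ofReal (Z ω)))
    (ψ0 : Ω → ℝ) (hψ0meas : Measurable ψ0)
    (hψ001 : ∀ ω, 0 ≤ ψ0 ω ∧ ψ0 ω ≤ 1)
    (c : ENNReal)
    (h1 : ∀ᵐ ω ∂μ, c * ENNReal.ofReal (Z ω) < 1 → ψ0 ω = 1)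
    (h0 : ∀ᵐ ω ∂μ, 1 < c * ENNReal.ofReal (Z ω) → ψ0 ω = 0) :
    ∀ ψ : Ω → ℝ, Measurable ψ → (∀ ω, 0 ≤ ψ ω ∧ ψ ω ≤ 1) →
      ∫ ω, ψ ω ∂ν ≤ ∫ ω, ψ0 ω ∂ν → ∫ ω, ψ ω ∂μ ≤ ∫ ω, ψ0 ω ∂μ := by
  subst hν
  intro ψ hψ hψ01
  have : IsFiniteMeasure (μ.withDensity fun ω => ENNReal.ofReal (Z ω)) :=
    isFiniteMeasure_withDensity_ofReal (integrable_of_integral_eq_one hZint).2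
  have integrable_test {φ : Ω → ℝ} (hφ : Measurable φ) (hφ01 : ∀ ω, 0 ≤ φ ω ∧ φ ω ≤ 1)
      (κ : Measure Ω) [IsFiniteMeasure κ] : Integrable φ κ :=
    .of_mem_Icc 0 1 hφ.aemeasurable (.of_forall hφ01)
  exact neyman_pearson_direction_general hZmeas.ennreal_ofReal.aemeasurable
    (integrable_test hψ0meas hψ001 μ) (integrable_test hψ0meas hψ001 _)
    (.of_forall fun ω => (hψ001 ω).1) h1 h0 hψ.aestronglyMeasurable (integrable_test hψ hψ01 _)
    (.of_forall fun ω => (hψ01 ω).1) (.of_forall fun ω => (hψ01 ω).2)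
end

section
/- (Neyman–Pearson converse.) Let μ be a probability measure on Ω, Z : Ω → ℝ a nonnegative measurable function with ∫ Z dμ = 1, and ν := μ.withDensity Z. Let ψ⁰ : Ω → ℝ be measurable with 0 ≤ ψ⁰ ≤ 1 and suppose that for every measurable ψ : Ω → ℝ with 0 ≤ ψ ≤ 1, the inequality ∫ ψ dν ≤ ∫ ψ⁰ dν implies ∫ ψ dμ ≤ ∫ ψ⁰ dμ. Then there exists c ∈ [0,∞] (extended nonnegative real) such that ψ⁰ = 1 μ-a.e. on {ω | c · Z ω < 1} and ψ⁰ = 0 μ-a.e. on {ω | c · Z ω > 1} (with the convention ∞ · 0 = 0). -/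
open MeasureTheory

/-!
An optimal test `ψ₀` cannot be improved by raising it by `U` and lowering it by `V` at no net cost
under `ν`. Rescaling `U` and `V` to equal `ν`-cost gives the exchange inequality
`(∫ U ∂μ) (∫ V ∂ν) ≤ (∫ U ∂ν) (∫ V ∂μ)`. Take `U = 1 - ψ₀` on `{f ≤ a}` and `V = ψ₀` on `{b ≤ f}`,
where `f = dν/dμ` and `a < b`: then `∫ U ∂ν ≤ a ∫ U ∂μ` and `b ∫ V ∂μ ≤ ∫ V ∂ν`, so one of the two
integrals against `μ` vanishes. Hence `f` is essentially at most as large where `ψ₀ ≠ 0` as where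
`ψ₀ ≠ 1`, and the essential infimum `t` of `f` on `{ψ₀ ≠ 1}` separates the two regions; `c = t⁻¹`.
-/

open scoped ENNReal NNReal

section

variable {Ω : Type*} [MeasurableSpace Ω]

section WithDensityBounds

variable {μ : Measure Ω} {f : Ω → ℝ≥0∞} {g : Ω → ℝ} {s : Set Ω} {c : ℝ≥0}

theorem setIntegral_withDensity_le_mul (hs : MeasurableSet s) (hf : ∀ ω ∈ s, f ω ≤ c)
    (hg : 0 ≤ g) (hgi : IntegrableOn g s μ) :
    ∫ ω in s, g ω ∂μ.withDensity f ≤ c * ∫ ω in s, g ω ∂μ := by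
  have measure_le : (μ.withDensity f).restrict s ≤ c • μ.restrict s := by
    rw [restrict_withDensity hs]
    exact (withDensity_mono (ae_restrict_of_forall_mem hs hf)).trans_eq (withDensity_const _)
  calc ∫ ω in s, g ω ∂μ.withDensity f
      ≤ ∫ ω, g ω ∂(c • μ.restrict s) :=
        integral_mono_measure measure_le (ae_of_all _ hg) hgi.smul_measure_nnreal
    _ = c * ∫ ω in s, g ω ∂μ := integral_smul_nnreal_measure g c

theorem mul_le_setIntegral_withDensity (hs : MeasurableSet s) (hf : ∀ ω ∈ s, c ≤ f ω)
    (hg : 0 ≤ g) (hgi : IntegrableOn g s (μ.withDensity f)) :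
    c * ∫ ω in s, g ω ∂μ ≤ ∫ ω in s, g ω ∂μ.withDensity f := by
  have measure_le : c • μ.restrict s ≤ (μ.withDensity f).restrict s := by
    rw [restrict_withDensity hs]
    exact (withDensity_const _).symm.trans_le
      (withDensity_mono (ae_restrict_of_forall_mem hs hf))
  calc c * ∫ ω in s, g ω ∂μ
      = ∫ ω, g ω ∂(c • μ.restrict s) := (integral_smul_nnreal_measure g c).symm
    _ ≤ ∫ ω in s, g ω ∂μ.withDensity f := integral_mono_measure measure_le (ae_of_all _ hg) hgi

end WithDensityBounds

/-- A randomized test: `ψ ω` is the probability of rejecting the null hypothesis after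
observing `ω`. -/
structure IsTest (ψ : Ω → ℝ) : Prop where
  measurable : Measurable ψ
  mem_Icc : ∀ ω, ψ ω ∈ Set.Icc 0 1

namespace IsTest

variable {ψ : Ω → ℝ}

theorem nonneg (h : IsTest ψ) : 0 ≤ ψ := fun ω ↦ (h.mem_Icc ω).1

theorem one_sub (h : IsTest ψ) : IsTest fun ω ↦ 1 - ψ ω :=
  ⟨h.measurable.const_sub 1, fun ω ↦ Set.Icc.mem_iff_one_sub_mem.1 (h.mem_Icc ω)⟩

theorem integrable (h : IsTest ψ) (μ : Measure Ω) [IsFiniteMeasure μ] : Integrable ψ μ :=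
  .of_mem_Icc 0 1 h.measurable.aemeasurable (ae_of_all _ h.mem_Icc)

theorem indicator_mem_Icc (h : IsTest ψ) (s : Set Ω) (ω : Ω) :
    s.indicator ψ ω ∈ Set.Icc 0 (ψ ω) :=
  ⟨Set.indicator_nonneg (fun ω _ ↦ h.nonneg ω) ω, Set.indicator_le_self' (fun ω _ ↦ h.nonneg ω) ω⟩

theorem ae_eq_zero_of_setIntegral_le_zero (h : IsTest ψ) {μ : Measure Ω} [IsFiniteMeasure μ]
    {s : Set Ω} (hs : MeasurableSet s) (hint : ∫ ω in s, ψ ω ∂μ ≤ 0) :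
    ∀ᵐ ω ∂μ, ω ∈ s → ψ ω = 0 := by
  rw [← ae_restrict_iff' hs]
  exact (setIntegral_eq_zero_iff_of_nonneg_ae (ae_of_all _ h.nonneg)
    (h.integrable μ).integrableOn).1 (hint.antisymm (integral_nonneg h.nonneg))

end IsTest

/-- The test `ψ₀` of the null hypothesis `ν` is most powerful against the alternative `μ`: no test
of at most the same size `∫ ψ₀ ∂ν` has greater power `∫ ψ₀ ∂μ`. -/
structure IsMostPowerfulTest (ν μ : Measure Ω) (ψ₀ : Ω → ℝ) : Prop extends IsTest ψ₀ where
  power_le : ∀ ψ, IsTest ψ → ∫ ω, ψ ω ∂ν ≤ ∫ ω, ψ₀ ω ∂ν → ∫ ω, ψ ω ∂μ ≤ ∫ ω, ψ₀ ω ∂μ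

namespace IsMostPowerfulTest

section Exchange

variable {μ ν : Measure Ω} [IsFiniteMeasure μ] [IsFiniteMeasure ν] {ψ₀ : Ω → ℝ}

theorem integral_le_of_integral_le (h : IsMostPowerfulTest ν μ ψ₀) {U V : Ω → ℝ}
    (hUm : Measurable U) (hU : ∀ ω, U ω ∈ Set.Icc 0 (1 - ψ₀ ω))
    (hVm : Measurable V) (hV : ∀ ω, V ω ∈ Set.Icc 0 (ψ₀ ω))
    (hUV : ∫ ω, U ω ∂ν ≤ ∫ ω, V ω ∂ν) : ∫ ω, U ω ∂μ ≤ ∫ ω, V ω ∂μ := by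
  have hUtest : IsTest U :=
    ⟨hUm, fun ω ↦ ⟨(hU ω).1, by linarith [(hU ω).2, (h.mem_Icc ω).1]⟩⟩
  have hVtest : IsTest V := ⟨hVm, fun ω ↦ ⟨(hV ω).1, (hV ω).2.trans (h.mem_Icc ω).2⟩⟩
  have perturbed_test : IsTest fun ω ↦ ψ₀ ω + U ω - V ω :=
    ⟨(h.measurable.add hUm).sub hVm, fun ω ↦
      ⟨by linarith [(hU ω).1, (hV ω).2], by linarith [(hU ω).2, (hV ω).1]⟩⟩
  have integral_perturbed (ρ : Measure Ω) [IsFiniteMeasure ρ] :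
      ∫ ω, ψ₀ ω + U ω - V ω ∂ρ = ∫ ω, ψ₀ ω ∂ρ + ∫ ω, U ω ∂ρ - ∫ ω, V ω ∂ρ := by
    rw [integral_sub (f := fun ω ↦ ψ₀ ω + U ω)
        ((h.integrable ρ).add (hUtest.integrable ρ)) (hVtest.integrable ρ),
      integral_add (h.integrable ρ) (hUtest.integrable ρ)]
  have power_le := h.power_le _ perturbed_test (by linarith [integral_perturbed ν])
  linarith [integral_perturbed μ]

theorem integral_mul_integral_le (h : IsMostPowerfulTest ν μ ψ₀) {U V : Ω → ℝ}
    (hUm : Measurable U) (hU : ∀ ω, U ω ∈ Set.Icc 0 (1 - ψ₀ ω))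
    (hVm : Measurable V) (hV : ∀ ω, V ω ∈ Set.Icc 0 (ψ₀ ω)) :
    (∫ ω, U ω ∂μ) * ∫ ω, V ω ∂ν ≤ (∫ ω, U ω ∂ν) * ∫ ω, V ω ∂μ := by
  set u := ∫ ω, U ω ∂ν with hu
  set v := ∫ ω, V ω ∂ν with hv
  have hu0 : 0 ≤ u := integral_nonneg fun ω ↦ (hU ω).1
  have hv0 : 0 ≤ v := integral_nonneg fun ω ↦ (hV ω).1
  have mul_mem_Icc {k w m : ℝ} (hk0 : 0 ≤ k) (hk1 : k ≤ 1) (hw : w ∈ Set.Icc 0 m) :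
      k * w ∈ Set.Icc 0 m :=
    ⟨mul_nonneg hk0 hw.1, (mul_le_of_le_one_left hw.1 hk1).trans hw.2⟩
  have hv1 : v / (1 + u + v) ≤ 1 := div_le_one_of_le₀ (by linarith) (by positivity)
  have hu1 : u / (1 + u + v) ≤ 1 := div_le_one_of_le₀ (by linarith) (by positivity)
  -- The weights `v` and `u` equalize the `ν`-costs; dividing them keeps them at most `1`.
  have scaled_le := h.integral_le_of_integral_le
    (U := fun ω ↦ v / (1 + u + v) * U ω) (V := fun ω ↦ u / (1 + u + v) * V ω)
    (hUm.const_mul _) (fun ω ↦ mul_mem_Icc (by positivity) hv1 (hU ω))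
    (hVm.const_mul _) (fun ω ↦ mul_mem_Icc (by positivity) hu1 (hV ω))
    (by simp only [integral_const_mul, ← hu, ← hv]; exact le_of_eq (by ring))
  rwa [integral_const_mul, integral_const_mul, div_mul_eq_mul_div, div_mul_eq_mul_div,
    div_le_div_iff_of_pos_right (by positivity), mul_comm v] at scaled_le

theorem setIntegral_mul_setIntegral_le (h : IsMostPowerfulTest ν μ ψ₀) {s t : Set Ω}
    (hs : MeasurableSet s) (ht : MeasurableSet t) :
    (∫ ω in s, 1 - ψ₀ ω ∂μ) * ∫ ω in t, ψ₀ ω ∂ν ≤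
      (∫ ω in s, 1 - ψ₀ ω ∂ν) * ∫ ω in t, ψ₀ ω ∂μ := by
  simpa only [integral_indicator hs, integral_indicator ht] using
    h.integral_mul_integral_le (h.one_sub.measurable.indicator hs) (h.one_sub.indicator_mem_Icc s)
      (h.measurable.indicator ht) (h.indicator_mem_Icc t)

theorem ae_eq_one_of_measure_eq_zero (h : IsMostPowerfulTest ν μ ψ₀) {s : Set Ω}
    (hs : MeasurableSet s) (hνs : ν s = 0) : ∀ᵐ ω ∂μ, ω ∈ s → ψ₀ ω = 1 := by
  have integral_le : ∫ ω, s.indicator (fun ω ↦ 1 - ψ₀ ω) ω ∂μ ≤ ∫ _, (0 : ℝ) ∂μ :=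
    h.integral_le_of_integral_le (h.one_sub.measurable.indicator hs)
      (h.one_sub.indicator_mem_Icc s) measurable_const (fun ω ↦ ⟨le_rfl, h.nonneg ω⟩)
      (by rw [integral_indicator hs, setIntegral_measure_zero _ hνs, integral_zero])
  rw [integral_indicator hs, integral_zero] at integral_le
  filter_upwards [h.one_sub.ae_eq_zero_of_setIntegral_le_zero hs integral_le] with ω hω hωs
  exact (sub_eq_zero.1 (hω hωs)).symm

end Exchange

section Density

variable {μ : Measure Ω} [IsFiniteMeasure μ] {f : Ω → ℝ≥0∞} [IsFiniteMeasure (μ.withDensity f)]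
  {ψ₀ : Ω → ℝ}

theorem ae_eq_one_or_ae_eq_zero (h : IsMostPowerfulTest (μ.withDensity f) μ ψ₀)
    (hf : Measurable f) {a b : ℝ≥0} (hab : a < b) :
    (∀ᵐ ω ∂μ, f ω ≤ a → ψ₀ ω = 1) ∨ ∀ᵐ ω ∂μ, b ≤ f ω → ψ₀ ω = 0 := by
  have hs : MeasurableSet {ω | f ω ≤ a} := measurableSet_le hf measurable_const
  have ht : MeasurableSet {ω | b ≤ f ω} := measurableSet_le measurable_const hf
  set u := ∫ ω in {ω | f ω ≤ a}, 1 - ψ₀ ω ∂μ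
  set v := ∫ ω in {ω | b ≤ f ω}, ψ₀ ω ∂μ
  have hu0 : 0 ≤ u := integral_nonneg h.one_sub.nonneg
  have hv0 : 0 ≤ v := integral_nonneg h.nonneg
  have weighted_le : u * (b * v) ≤ a * u * v := calc
    u * (b * v) ≤ u * ∫ ω in {ω | b ≤ f ω}, ψ₀ ω ∂μ.withDensity f := by
      gcongr
      exact mul_le_setIntegral_withDensity ht (fun _ hω ↦ hω) h.nonneg (h.integrable _).integrableOn
    _ ≤ (∫ ω in {ω | f ω ≤ a}, 1 - ψ₀ ω ∂μ.withDensity f) * v :=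
      h.setIntegral_mul_setIntegral_le hs ht
    _ ≤ a * u * v := by
      gcongr
      exact setIntegral_withDensity_le_mul hs (fun _ hω ↦ hω) h.one_sub.nonneg
        (h.one_sub.integrable _).integrableOn
  have hab' : (a : ℝ) < b := hab
  rcases hu0.eq_or_lt with hu | hu
  · left
    filter_upwards [h.one_sub.ae_eq_zero_of_setIntegral_le_zero hs hu.ge] with ω hω hωa
    exact (sub_eq_zero.1 (hω hωa)).symm
  · right
    have hv : v ≤ 0 := by nlinarith [mul_pos hu (sub_pos.2 hab')]
    exact h.ae_eq_zero_of_setIntegral_le_zero ht hv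

theorem essSup_le_essInf (h : IsMostPowerfulTest (μ.withDensity f) μ ψ₀) (hf : Measurable f) :
    essSup f (μ.restrict {ω | ψ₀ ω ≠ 0}) ≤ essInf f (μ.restrict {ω | ψ₀ ω ≠ 1}) := by
  have ne_zero_meas : MeasurableSet {ω | ψ₀ ω ≠ 0} :=
    (measurableSet_eq_fun h.measurable measurable_const).compl
  have ne_one_meas : MeasurableSet {ω | ψ₀ ω ≠ 1} :=
    (measurableSet_eq_fun h.measurable measurable_const).compl
  by_contra! hlt
  obtain ⟨b, hIb, hbS⟩ := ENNReal.lt_iff_exists_nnreal_btwn.1 hlt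
  obtain ⟨a, hIa, hab⟩ := ENNReal.lt_iff_exists_nnreal_btwn.1 hIb
  rcases h.ae_eq_one_or_ae_eq_zero hf (ENNReal.coe_lt_coe.1 hab) with eq_one | eq_zero
  · refine hIa.not_ge (le_essInf_of_ae_le _ ((ae_restrict_iff' ne_one_meas).2 ?_))
    filter_upwards [eq_one] with ω hω hne
    exact (not_le.1 (mt hω hne)).le
  · refine hbS.not_ge (essSup_le_of_ae_le _ ((ae_restrict_iff' ne_zero_meas).2 ?_))
    filter_upwards [eq_zero] with ω hω hne
    exact (not_le.1 (mt hω hne)).le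

theorem exists_ae_threshold (h : IsMostPowerfulTest (μ.withDensity f) μ ψ₀) (hf : Measurable f) :
    ∃ t : ℝ≥0∞, (∀ᵐ ω ∂μ, f ω < t → ψ₀ ω = 1) ∧ ∀ᵐ ω ∂μ, t < f ω → ψ₀ ω = 0 := by
  refine ⟨essInf f (μ.restrict {ω | ψ₀ ω ≠ 1}), ?_, ?_⟩
  · filter_upwards [ae_imp_of_ae_restrict (ae_essInf_le (f := f))] with ω hω hlt
    exact not_not.1 fun hne ↦ hlt.not_ge (hω hne)
  · filter_upwards [ae_imp_of_ae_restrict (ENNReal.ae_le_essSup f)] with ω hω hlt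
    exact not_not.1 fun hne ↦ hlt.not_ge ((hω hne).trans (h.essSup_le_essInf hf))

end Density

end IsMostPowerfulTest

theorem neyman_pearson_converse_general {μ : Measure Ω} [IsFiniteMeasure μ] {f : Ω → ℝ≥0∞}
    (hf : Measurable f) (hfi : ∫⁻ ω, f ω ∂μ ≠ ∞) {ψ₀ : Ω → ℝ}
    (h : IsMostPowerfulTest (μ.withDensity f) μ ψ₀) :
    ∃ c : ℝ≥0∞, (∀ᵐ ω ∂μ, c * f ω < 1 → ψ₀ ω = 1) ∧ ∀ᵐ ω ∂μ, 1 < c * f ω → ψ₀ ω = 0 := by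
  have := isFiniteMeasure_withDensity hfi
  obtain ⟨t, eq_one, eq_zero⟩ := h.exists_ae_threshold hf
  -- Needed when `t = 0`: there `∞ * f ω < 1` still holds on `{f = 0}`, which `f < t` misses.
  have eq_one_of_density_zero : ∀ᵐ ω ∂μ, f ω = 0 → ψ₀ ω = 1 :=
    h.ae_eq_one_of_measure_eq_zero (s := {ω | f ω = 0}) (measurableSet_eq_fun hf measurable_const)
      ((withDensity_apply_eq_zero hf).2 (measure_mono_null (fun _ hω ↦ hω.1 hω.2) measure_empty))
  refine ⟨t⁻¹, ?_, ?_⟩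
  · filter_upwards [eq_one, eq_one_of_density_zero, ae_lt_top hf hfi] with ω hω hω0 hω_top hlt
    rcases eq_or_ne (f ω) 0 with hfω | hfω
    · exact hω0 hfω
    · rw [mul_comm, ← div_eq_mul_inv, ENNReal.div_lt_iff (.inr hfω) (.inr hω_top.ne),
        one_mul] at hlt
      exact hω hlt
  · filter_upwards [eq_zero] with ω hω hlt
    rw [mul_comm, ← div_eq_mul_inv] at hlt
    exact hω (one_mul t ▸ ENNReal.mul_lt_of_lt_div hlt)

end

/-- Lemma A.6(b) (Neyman–Pearson converse): a `[0,1]`-valued test that is optimal in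
the sense of Lemma A.6(a) must be of threshold form. -/
theorem neyman_pearson_converse {Ω : Type*} [MeasurableSpace Ω]
    (μ : Measure Ω) [IsProbabilityMeasure μ]
    (Z : Ω → ℝ) (hZmeas : Measurable Z) (hZnn : ∀ ω, 0 ≤ Z ω)
    (hZint : ∫ ω, Z ω ∂μ = 1)
    (ν : Measure Ω) (hν : ν = μ.withDensity (fun ω => ENNReal.ofReal (Z ω)))
    (ψ0 : Ω → ℝ) (hψ0meas : Measurable ψ0)
    (hψ001 : ∀ ω, 0 ≤ ψ0 ω ∧ ψ0 ω ≤ 1)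
    (hopt : ∀ ψ : Ω → ℝ, Measurable ψ → (∀ ω, 0 ≤ ψ ω ∧ ψ ω ≤ 1) →
      ∫ ω, ψ ω ∂ν ≤ ∫ ω, ψ0 ω ∂ν → ∫ ω, ψ ω ∂μ ≤ ∫ ω, ψ0 ω ∂μ) :
    ∃ c : ENNReal,
      (∀ᵐ ω ∂μ, c * ENNReal.ofReal (Z ω) < 1 → ψ0 ω = 1) ∧
      (∀ᵐ ω ∂μ, 1 < c * ENNReal.ofReal (Z ω) → ψ0 ω = 0) :=
  neyman_pearson_converse_general hZmeas.ennreal_ofReal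
    (integrable_of_integral_eq_one hZint).lintegral_lt_top.ne
    (hν ▸ ⟨⟨hψ0meas, hψ001⟩, fun ψ hψ ↦ hopt ψ hψ.measurable hψ.mem_Icc⟩)
end

section
/- Let μ be a probability measure on Ω, X : Ω → ℝ a bounded measurable function, and α ∈ (0,1). Let q := sInf {s ∈ ℝ | μ{X ≤ s} ≥ α} be the lower α-quantile of X, and define ε := 0 if μ{X = q} = 0 and ε := (α − μ{X < q}) / μ{X = q} otherwise (all measure values taken as reals). Then ε ∈ [0,1], the function Z* := (1/α)(1_{X < q} + ε · 1_{X = q}) satisfies 0 ≤ Z* ≤ 1/α pointwise, and ∫ Z* dμ = 1. -/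
open MeasureTheory

/-!
The lower `α`-quantile `q` of a law `ν` satisfies `ν (Iio q) ≤ α ≤ ν (Iic q)`, by continuity of `ν`
along the half-lines `Iic s` with `s < q` and with `s` in the set whose infimum is `q`. The missing
mass `α - ν (Iio q)` is therefore at most that of the atom at `q`, and `ε` is the fraction of the
atom that makes it up: `ν (Iio q) + ε * ν {q} = α`. Dividing by `α` gives total mass one.
-/

open Set Filter

section Law

variable {R : Type*} [MeasurableSpace R] {ν : Measure R} {α : ℝ} {q : R}

/-- `q` is an `α`-quantile of the law `ν`. The level `α` is an absolute amount of mass, not a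
fraction of the total mass of `ν`. -/
structure IsQuantile [Preorder R] (ν : Measure R) (α : ℝ) (q : R) : Prop where
  measureReal_Iio_le : ν.real (Iio q) ≤ α
  le_measureReal_Iic : α ≤ ν.real (Iic q)

/-- The fraction of the atom at `q` that complements `Iio q` to mass `α`, written `ε` in the
theorem. When `q` is not an atom, it is `0` because `x / 0 = 0`. -/
noncomputable def atomWeight [Preorder R] (ν : Measure R) (α : ℝ) (q : R) : ℝ :=
  (α - ν.real (Iio q)) / ν.real {q}

/-- The extreme density `Z*` of Average Value at Risk at level `α`, as a function of the value of
the random variable with law `ν`. -/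
noncomputable def avarDensity [Preorder R] (ν : Measure R) (α : ℝ) (q x : R) : ℝ :=
  1 / α * ((Iio q).indicator 1 x + atomWeight ν α q * ({q} : Set R).indicator 1 x)

section LowerQuantile

theorem nonempty_setOf_le_measureReal_Iic [IsFiniteMeasure ν] [Preorder R] [IsDirectedOrder R]
    [Nonempty R] [(atTop : Filter R).IsCountablyGenerated] (hα : α < ν.real univ) :
    {s | α ≤ ν.real (Iic s)}.Nonempty :=
  (((ENNReal.tendsto_toReal (measure_ne_top ν univ)).comp
    (tendsto_measure_Iic_atTop ν)).eventually_const_le hα).exists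

variable [TopologicalSpace R] [SecondCountableTopology R] [IsFiniteMeasure ν]

section LinearOrder

variable [LinearOrder R] [OrderTopology R]

theorem measureReal_Iio_le_of_forall_lt (hα : 0 ≤ α) (h : ∀ s < q, ν.real (Iic s) ≤ α) :
    ν.real (Iio q) ≤ α := by
  have iUnion_Iic : ⋃ s : Iio q, Iic s.1 = Iio q := by
    ext x
    simpa using ⟨fun ⟨_, hs, hxs⟩ => hxs.trans_lt hs, fun hx => ⟨x, hx, le_rfl⟩⟩
  have monotone_halfLine : Monotone fun s : Iio q => Iic s.1 :=
    monotone_Iic.comp (Subtype.mono_coe _)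
  refine ENNReal.toReal_le_of_le_ofReal hα ?_
  rw [← iUnion_Iic, monotone_halfLine.measure_iUnion]
  exact iSup_le fun s => (ENNReal.le_ofReal_iff_toReal_le (measure_ne_top _ _) hα).mpr (h s s.2)

theorem le_measureReal_lowerBounds [OpensMeasurableSpace R]
    (hne : {s | α ≤ ν.real (Iic s)}.Nonempty) :
    α ≤ ν.real (lowerBounds {s | α ≤ ν.real (Iic s)}) := by
  set S := {s | α ≤ ν.real (Iic s)}
  have ordConnected : S.OrdConnected := IsUpperSet.ordConnected fun _ _ hst hs =>
    hs.trans (measureReal_mono (Iic_subset_Iic.mpr hst))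
  have iInter_Iic : ⋂ s : S, Iic s.1 = lowerBounds S := by
    ext x
    simp [mem_lowerBounds]
  have monotone_halfLine : Monotone fun s : S => Iic s.1 :=
    monotone_Iic.comp (Subtype.mono_coe _)
  refine (ENNReal.ofReal_le_iff_le_toReal (measure_ne_top _ _)).mp ?_
  rw [← iInter_Iic, monotone_halfLine.measure_iInter
    (fun _ => measurableSet_Iic.nullMeasurableSet) ⟨⟨_, hne.some_mem⟩, measure_ne_top _ _⟩]
  exact le_iInf fun s => (ENNReal.ofReal_le_iff_le_toReal (measure_ne_top _ _)).mpr s.2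

end LinearOrder

theorem isQuantile_sInf [ConditionallyCompleteLinearOrder R] [OrderTopology R]
    [OpensMeasurableSpace R] (hα : α ∈ Ioo 0 (ν.real univ)) :
    IsQuantile ν α (sInf {s | α ≤ ν.real (Iic s)}) := by
  have nonempty := nonempty_setOf_le_measureReal_Iic hα.2
  have le_lowerBounds := le_measureReal_lowerBounds nonempty
  have bddBelow : BddBelow {s | α ≤ ν.real (Iic s)} :=
    nonempty_of_measureReal_ne_zero (hα.1.trans_le le_lowerBounds).ne'
  refine ⟨measureReal_Iio_le_of_forall_lt hα.1.le fun s hs => ?_, ?_⟩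
  · exact (not_le.mp fun h => notMem_of_lt_csInf hs bddBelow h).le
  · rwa [(isGLB_csInf nonempty bddBelow).lowerBounds_eq] at le_lowerBounds

end LowerQuantile

section Density

theorem avarDensity_mem_Icc [Preorder R] (hα : 0 ≤ α) (hε : atomWeight ν α q ∈ Icc 0 1)
    (x : R) : avarDensity ν α q x ∈ Icc 0 (1 / α) := by
  have bracket_mem : (Iio q).indicator 1 x + atomWeight ν α q * ({q} : Set R).indicator 1 x
      ∈ Icc (0 : ℝ) 1 := by
    rcases eq_or_ne x q with rfl | hx
    · simpa using hε
    · by_cases hlt : x < q <;> simp [hx, hlt]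
  have inv_nonneg : 0 ≤ 1 / α := one_div_nonneg.mpr hα
  exact ⟨mul_nonneg inv_nonneg bracket_mem.1, mul_le_of_le_one_right inv_nonneg bracket_mem.2⟩

variable [PartialOrder R] [MeasurableSingletonClass R]

theorem measureReal_Iio_add_singleton (ν : Measure R) [IsFiniteMeasure ν] (q : R) :
    ν.real (Iio q) + ν.real {q} = ν.real (Iic q) := by
  rw [← Iio_union_right, measureReal_union (by simp) (measurableSet_singleton q)]

variable [IsFiniteMeasure ν]

theorem IsQuantile.atomWeight_mem_Icc (h : IsQuantile ν α q) : atomWeight ν α q ∈ Icc 0 1 := by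
  have gap_le_atom : α - ν.real (Iio q) ≤ ν.real {q} := by
    linarith [h.le_measureReal_Iic, measureReal_Iio_add_singleton ν q]
  exact ⟨div_nonneg (sub_nonneg.mpr h.measureReal_Iio_le) measureReal_nonneg,
    div_le_one_of_le₀ gap_le_atom measureReal_nonneg⟩

theorem IsQuantile.measureReal_Iio_add_atomWeight_mul (h : IsQuantile ν α q) :
    ν.real (Iio q) + atomWeight ν α q * ν.real {q} = α := by
  have gap_eq_zero (hq : ν.real {q} = 0) : α - ν.real (Iio q) = 0 := by
    linarith [h.measureReal_Iio_le, h.le_measureReal_Iic, measureReal_Iio_add_singleton ν q]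
  rw [atomWeight, div_mul_cancel_of_imp gap_eq_zero, add_sub_cancel]

end Density

section Integral

variable [LinearOrder R] [TopologicalSpace R] [OrderClosedTopology R] [OpensMeasurableSpace R]

theorem measurable_avarDensity : Measurable (avarDensity ν α q) :=
  ((measurable_one.indicator measurableSet_Iio).add
    ((measurable_one.indicator (measurableSet_singleton q)).const_mul _)).const_mul _

theorem IsQuantile.integral_avarDensity [IsFiniteMeasure ν] (h : IsQuantile ν α q) (hα : α ≠ 0) :
    ∫ x, avarDensity ν α q x ∂ν = 1 := by
  have integrable_indicator {A : Set R} (hA : MeasurableSet A) :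
      Integrable (A.indicator (1 : R → ℝ)) ν := (integrable_const 1).indicator hA
  calc ∫ x, avarDensity ν α q x ∂ν
      = 1 / α * (ν.real (Iio q) + atomWeight ν α q * ν.real {q}) := by
        simp only [avarDensity]
        rw [integral_const_mul, integral_add (integrable_indicator measurableSet_Iio)
          ((integrable_indicator (measurableSet_singleton q)).const_mul _), integral_const_mul,
          integral_indicator_one measurableSet_Iio,
          integral_indicator_one (measurableSet_singleton q)]
    _ = 1 := by rw [h.measureReal_Iio_add_atomWeight_mul, one_div_mul_cancel hα]

end Integral

end Law

theorem avar_extreme_density_general {Ω R : Type*} [MeasurableSpace Ω]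
    [ConditionallyCompleteLinearOrder R] [TopologicalSpace R] [OrderTopology R]
    [SecondCountableTopology R] [MeasurableSpace R] [OpensMeasurableSpace R]
    (μ : Measure Ω) [IsFiniteMeasure μ] (X : Ω → R) (hX : AEMeasurable X μ)
    (α : ℝ) (hα : α ∈ Ioo 0 (μ.real univ))
    (q : R) (hq : q = sInf {s | α ≤ μ.real {ω | X ω ≤ s}})
    (ε : ℝ)
    (hε : ε = if μ.real {ω | X ω = q} = 0 then 0
      else (α - μ.real {ω | X ω < q}) / μ.real {ω | X ω = q})
    (Zstar : Ω → ℝ)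
    (hZstar : Zstar = fun ω => 1 / α * ({ω | X ω < q}.indicator 1 ω
      + ε * {ω | X ω = q}.indicator 1 ω)) :
    ε ∈ Icc 0 1 ∧ (∀ ω, 0 ≤ Zstar ω ∧ Zstar ω ≤ 1 / α) ∧ ∫ ω, Zstar ω ∂μ = 1 := by
  set ν := μ.map X
  have law_apply {A : Set R} (hA : MeasurableSet A) : ν.real A = μ.real (X ⁻¹' A) :=
    map_measureReal_apply_of_aemeasurable hX hA
  have isQuantile : IsQuantile ν α q := by
    have hαν : α ∈ Ioo 0 (ν.real univ) := by rwa [law_apply .univ]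
    simpa only [hq, law_apply measurableSet_Iic] using! isQuantile_sInf hαν
  have weight_eq : ε = atomWeight ν α q := by
    rw [hε, atomWeight, law_apply measurableSet_Iio, law_apply (measurableSet_singleton q)]
    exact ite_eq_right_iff.mpr fun h => by rw [h, div_zero]
  have density_eq : Zstar = avarDensity ν α q ∘ X := by
    rw [hZstar, weight_eq]
    rfl
  subst weight_eq density_eq
  refine ⟨isQuantile.atomWeight_mem_Icc,
    fun ω => avarDensity_mem_Icc hα.1.le isQuantile.atomWeight_mem_Icc (X ω), ?_⟩
  rw [← isQuantile.integral_avarDensity hα.1.ne',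
    integral_map hX measurable_avarDensity.aestronglyMeasurable]
  rfl

/-- Theorem A.7 (part 1): the candidate extreme density
`Z* = (1/α)(1_{X<q} + ε·1_{X=q})` is a valid density: `ε ∈ [0,1]`,
`0 ≤ Z* ≤ 1/α`, and `∫ Z* dμ = 1`. -/
theorem avar_extreme_density {Ω : Type*} [MeasurableSpace Ω]
    (μ : Measure Ω) [IsProbabilityMeasure μ]
    (X : Ω → ℝ) (hXmeas : Measurable X) (hXb : ∃ C, ∀ ω, |X ω| ≤ C)
    (α : ℝ) (hα : α ∈ Set.Ioo (0:ℝ) 1)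
    (q : ℝ) (hq : q = sInf {s : ℝ | α ≤ (μ {ω | X ω ≤ s}).toReal})
    (ε : ℝ)
    (hε : ε = if (μ {ω | X ω = q}).toReal = 0 then 0
              else (α - (μ {ω | X ω < q}).toReal) / (μ {ω | X ω = q}).toReal)
    (Zstar : Ω → ℝ)
    (hZstar : Zstar = fun ω => (1/α) * (({ω | X ω < q} : Set Ω).indicator 1 ω
                + ε * ({ω | X ω = q} : Set Ω).indicator 1 ω)) :
    ε ∈ Set.Icc (0:ℝ) 1 ∧ (∀ ω, 0 ≤ Zstar ω ∧ Zstar ω ≤ 1/α) ∧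
      ∫ ω, Zstar ω ∂μ = 1 :=
  avar_extreme_density_general μ X hXmeas.aemeasurable α (by simpa using hα) q hq ε hε Zstar hZstar
end
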